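/- Let C be a regular, irreducible curve that is projective over a field k, with function field F = k(C), arithmetic genus t, and a k-rational point O. For every integer d ≥ 3t + 1, the tame symbol induces an isomorphism F_d / F_{d−1} ≅ ∐_{O ≠ P ∈ C_d} k(P)^*. -/

import Mathlib

open scoped TensorProduct

noncomputable section

/-- The set of Steinberg relations in `Fˣ ⊗_ℤ Fˣ` (written additively):
the elements `a ⊗ b` with `a + b = 1` in `F`. -/
def SteinbergSet (F : Type*) [Field F] :
    Set (TensorProduct ℤ (Additive Fˣ) (Additive Fˣ)) :=
  { x | ∃ a b : Fˣ, (a : F) + (b : F) = 1 ∧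
      x = Additive.ofMul a ⊗ₜ[ℤ] Additive.ofMul b }

/-- Milnor's `K₂` of a field, via Matsumoto's presentation. -/
abbrev K2 (F : Type*) [Field F] :=
  (TensorProduct ℤ (Additive Fˣ) (Additive Fˣ)) ⧸
    Submodule.span ℤ (SteinbergSet F)

/-- The symbol `{f, g}` in `K₂(F)`. -/
def symbol {F : Type*} [Field F] (f g : Fˣ) : K2 F :=
  Submodule.Quotient.mk (Additive.ofMul f ⊗ₜ[ℤ] Additive.ofMul g)

/-- The degree of a divisor `D` on the curve: `∑_P deg(P) · D(P)`,
where `deg P = [k(P) : k]`. -/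
def divDeg (k : Type*) [Field k] {Pt : Type*} (res : Pt → Type*)
    [∀ P, Field (res P)] [∀ P, Algebra k (res P)] (D : Pt →₀ ℤ) : ℤ :=
  ∑ᶠ P, (Module.finrank k (res P) : ℤ) * D P

/-- Axioms for a regular, irreducible curve `C`, projective over a field `k`, with
`H⁰(C, O_C) = k`, presented through: its function field `F = k(C)`, its set `Pt` of
closed points, the residue fields `res P = k(P)`, the normalized valuations `ord P`,
the evaluation maps `ev P` (evaluation at `P` of functions regular at `P`), the
Riemann-Roch spaces `L D = H⁰(C, O_C(D))`, and the arithmetic genus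
`t = dim_k H¹(C, O_C)`, characterized by the Riemann-Roch relations. -/
structure IsProjCurve (k F : Type*) [Field k] [Field F] [Algebra k F]
    {Pt : Type*} (res : Pt → Type*) [∀ P, Field (res P)] [∀ P, Algebra k (res P)]
    (ord : Pt → F → ℤ) (ev : ∀ P, F → res P)
    (L : (Pt →₀ ℤ) → Submodule k F) (t : ℕ) : Prop where
  finiteDimensional_res : ∀ P, FiniteDimensional k (res P)
  ord_mul : ∀ P (f g : F), f ≠ 0 → g ≠ 0 → ord P (f * g) = ord P f + ord P g
  ord_add : ∀ P (f g : F), f ≠ 0 → g ≠ 0 → f + g ≠ 0 →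
      min (ord P f) (ord P g) ≤ ord P (f + g)
  ord_algebraMap : ∀ P (c : k), c ≠ 0 → ord P (algebraMap k F c) = 0
  ord_uniformizer : ∀ P, ∃ f : F, f ≠ 0 ∧ ord P f = 1
  ord_separates : ∀ P Q, (∀ f : F, ord P f = ord Q f) → P = Q
  support_finite : ∀ f : F, f ≠ 0 → {P | ord P f ≠ 0}.Finite
  degree_formula : ∀ f : F, f ≠ 0 →
      ∑ᶠ P, (Module.finrank k (res P) : ℤ) * ord P f = 0
  ev_zero : ∀ P, ev P 0 = 0
  ev_one : ∀ P, ev P 1 = 1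
  ev_add : ∀ P (f g : F), f ≠ 0 → g ≠ 0 → 0 ≤ ord P f → 0 ≤ ord P g →
      ev P (f + g) = ev P f + ev P g
  ev_mul : ∀ P (f g : F), f ≠ 0 → g ≠ 0 → 0 ≤ ord P f → 0 ≤ ord P g →
      ev P (f * g) = ev P f * ev P g
  ev_algebraMap : ∀ P (c : k), ev P (algebraMap k F c) = algebraMap k (res P) c
  ev_eq_zero_iff : ∀ P (f : F), f ≠ 0 → 0 ≤ ord P f → (ev P f = 0 ↔ 0 < ord P f)
  ev_surjective : ∀ P (y : res P), ∃ f : F, f ≠ 0 ∧ 0 ≤ ord P f ∧ ev P f = y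
  mem_L : ∀ (D : Pt →₀ ℤ) (f : F), f ∈ L D ↔ (f ≠ 0 → ∀ P, 0 ≤ D P + ord P f)
  finiteDimensional_L : ∀ D, FiniteDimensional k (L D)
  global_sections : ∀ f : F, f ∈ L 0 ↔ ∃ c : k, algebraMap k F c = f
  rr_ineq : ∀ D : Pt →₀ ℤ,
      divDeg k res D + 1 - t ≤ (Module.finrank k (L D) : ℤ)
  rr_eq : ∀ D : Pt →₀ ℤ, 2 * (t : ℤ) - 2 < divDeg k res D →
      (Module.finrank k (L D) : ℤ) = divDeg k res D + 1 - t

/-- `T` is the tame symbol `K₂(F) → ∐_{P} k(P)^*`: it is determined by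
`T_P({f,g}) = (-1)^{ord_P(f)·ord_P(g)} (f^{ord_P(g)} / g^{ord_P(f)})(P)`. -/
def IsTameSymbol {F : Type*} [Field F] {Pt : Type*} {res : Pt → Type*}
    [∀ P, Field (res P)]
    (ord : Pt → F → ℤ) (ev : ∀ P, F → res P)
    (T : K2 F →+ Π₀ P : Pt, Additive ((res P)ˣ)) : Prop :=
  ∀ (f g : Fˣ) (P : Pt),
    ((Additive.toMul (T (symbol f g) P) : (res P)ˣ) : res P) =
      ev P (((-1 : Fˣ) ^ (ord P (f : F) * ord P (g : F)) *
        f ^ (ord P (g : F)) * g ^ (-ord P (f : F)) : Fˣ) : F)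

/-- `F_d`: the subgroup of `K₂(F)` generated by the symbols `{f, g}` with
`|(f)| ∪ |(g)| ⊆ C_{≤ d}`. -/
def Fsub (k : Type*) [Field k] {F : Type*} [Field F] {Pt : Type*} (res : Pt → Type*)
    [∀ P, Field (res P)] [∀ P, Algebra k (res P)]
    (ord : Pt → F → ℤ) (d : ℕ) : AddSubgroup (K2 F) :=
  AddSubgroup.closure
    { x | ∃ f g : Fˣ,
        (∀ P, ord P (f : F) ≠ 0 → Module.finrank k (res P) ≤ d) ∧
        (∀ P, ord P (g : F) ≠ 0 → Module.finrank k (res P) ≤ d) ∧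
        x = symbol f g }

/-!
Write `d = n + 1`. The inverse of the tame symbol on `F_{n+1} / F_n` sends `y` in `k(P)^*`, for
`P ≠ O` of degree `n + 1`, to the class of `{u, π_P}`, where `u` is supported in degree at most `n`
with `u(P) = y`, and `π_P` is a function whose divisor is `P` up to `O` and points of degree at
most `n`. Such `u` exist by Riemann's inequality, as quotients of functions with poles only at `O`.

The class does not depend on `u`. If `x` and `y` have poles only at `O`, of total order less than
`2(n + 1)`, and agree at `P`, then `y - x = π_P w` with `w` supported in degree at most `n`, and the
Steinberg relation for `x / y + π_P w / y = 1` puts `{x / y, π_P}` in `F_n`. Every `u` is a product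
of functions with a pole of order at most `n + t` and inverses of such, and Riemann's inequality
provides the common denominators that reduce a product of these to the case just treated.

The symbols `{u, π_P}` exhaust `F_{n+1}` modulo `F_n`: for `P ≠ Q`, a dimension count gives
`a`, `b`, `c` supported in degree at most `n` with `π_P a + π_Q b = c`, and the Steinberg relation
eliminates `{π_P, π_Q}`.
-/

section Symbols

variable {F : Type*} [Field F]

lemma symbol_mul_left (f g h : Fˣ) : symbol (f * g) h = symbol f h + symbol g h := by
  simp only [symbol, ofMul_mul, TensorProduct.add_tmul, Submodule.Quotient.mk_add]

lemma symbol_mul_right (f g h : Fˣ) : symbol f (g * h) = symbol f g + symbol f h := by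
  simp only [symbol, ofMul_mul, TensorProduct.tmul_add, Submodule.Quotient.mk_add]

lemma symbol_one_left (g : Fˣ) : symbol 1 g = 0 := by
  simpa using symbol_mul_left 1 1 g

lemma symbol_one_right (f : Fˣ) : symbol f 1 = 0 := by
  simpa using symbol_mul_right f 1 1

lemma symbol_inv_left (f g : Fˣ) : symbol f⁻¹ g = -symbol f g := by
  have h := symbol_mul_left f⁻¹ f g
  rw [inv_mul_cancel, symbol_one_left] at h
  exact eq_neg_of_add_eq_zero_left h.symm

lemma symbol_inv_right (f g : Fˣ) : symbol f g⁻¹ = -symbol f g := by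
  have h := symbol_mul_right f g⁻¹ g
  rw [inv_mul_cancel, symbol_one_right] at h
  exact eq_neg_of_add_eq_zero_left h.symm

lemma symbol_eq_zero_of_add_eq_one {a b : Fˣ} (h : (a : F) + b = 1) : symbol a b = 0 :=
  (Submodule.Quotient.mk_eq_zero _).2 (Submodule.subset_span ⟨a, b, h, rfl⟩)

lemma symbol_self_neg (a : Fˣ) : symbol a (-a) = 0 := by
  by_cases ha : a = 1
  · rw [ha, symbol_one_left]
  have ha' : (a : F) ≠ 1 := by simpa using ha
  have hb : (1 - a : F) ≠ 0 := sub_ne_zero.2 ha'.symm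
  have hc : (1 - (a : F)⁻¹) ≠ 0 := sub_ne_zero.2 fun h => ha' (inv_eq_one.1 h.symm)
  have hneg : -a = Units.mk0 _ hb * (Units.mk0 _ hc)⁻¹ := by
    rw [eq_mul_inv_iff_mul_eq]
    ext
    simp [mul_sub]
  have h₁ : symbol a (Units.mk0 _ hb) = 0 := symbol_eq_zero_of_add_eq_one (by simp)
  have h₂ : symbol a⁻¹ (Units.mk0 _ hc) = 0 := symbol_eq_zero_of_add_eq_one (by simp)
  rw [symbol_inv_left, neg_eq_zero] at h₂
  rw [hneg, symbol_mul_right, symbol_inv_right, h₁, h₂, neg_zero, add_zero]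

lemma symbol_self (a : Fˣ) : symbol a a = symbol a (-1) := by
  have h := symbol_mul_right a (-1) (-a)
  rwa [neg_mul_neg, one_mul, symbol_self_neg, add_zero] at h

lemma symbol_swap (a b : Fˣ) : symbol b a = -symbol a b := by
  have h := symbol_self_neg (a * b)
  rw [symbol_mul_left, ← neg_mul, symbol_mul_right, symbol_self_neg, zero_add, neg_mul, ← mul_neg,
    symbol_mul_right b, symbol_self_neg, add_zero] at h
  exact eq_neg_of_add_eq_zero_right h

lemma symbol_mem_of_mul_add_mul_eq {B : AddSubgroup (K2 F)} {p q a b c : Fˣ}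
    (h : (p * a + q * b : F) = c) (hp : symbol p (b / c) ∈ B) (hq : symbol (a / c) q ∈ B)
    (hab : symbol (a / c) (b / c) ∈ B) : symbol p q ∈ B := by
  have steinberg : symbol (p * (a / c)) (q * (b / c)) = 0 := by
    refine symbol_eq_zero_of_add_eq_one ?_
    have := c.ne_zero
    simp only [Units.val_div_eq_div_val, Units.val_mul]
    field_simp
    exact h
  rw [symbol_mul_left, symbol_mul_right, symbol_mul_right, add_assoc] at steinberg
  rw [eq_neg_of_add_eq_zero_left steinberg]
  exact B.neg_mem (B.add_mem hp (B.add_mem hq hab))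

lemma symbol_mem_of_mem_closure {B : AddSubgroup (K2 F)} {s t : Set Fˣ}
    (h : ∀ a ∈ s, ∀ b ∈ t, symbol a b ∈ B) {f g : Fˣ} (hf : f ∈ Subgroup.closure s)
    (hg : g ∈ Subgroup.closure t) : symbol f g ∈ B := by
  have hs : ∀ b ∈ t, symbol f b ∈ B := fun b hb => by
    induction hf using Subgroup.closure_induction with
    | mem a ha => exact h a ha b hb
    | one => exact symbol_one_left b ▸ B.zero_mem
    | mul a a' _ _ ha ha' => exact symbol_mul_left a a' b ▸ B.add_mem ha ha'
    | inv a _ ha => exact symbol_inv_left a b ▸ B.neg_mem ha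
  induction hg using Subgroup.closure_induction with
  | mem b hb => exact hs b hb
  | one => exact symbol_one_right f ▸ B.zero_mem
  | mul b b' _ _ hb hb' => exact symbol_mul_right f b b' ▸ B.add_mem hb hb'
  | inv b _ hb => exact symbol_inv_right f b ▸ B.neg_mem hb

/-- The homomorphism `u ↦ {u, v}` to `K₂(F)` modulo a subgroup `B`; it is multiplicative so as to
be defined on subgroups of `Fˣ`. -/
def symbolMod (B : AddSubgroup (K2 F)) (v : Fˣ) : Fˣ →* Multiplicative (K2 F ⧸ B) :=
  MonoidHom.mk' (fun u => Multiplicative.ofAdd (symbol u v : K2 F ⧸ B)) fun u u' => by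
    rw [symbol_mul_left, QuotientAddGroup.mk_add, ofAdd_add]

lemma symbolMod_eq_one_iff {B : AddSubgroup (K2 F)} {u v : Fˣ} :
    symbolMod B v u = 1 ↔ symbol u v ∈ B :=
  QuotientAddGroup.eq_zero_iff _

end Symbols

section Groups

lemma mem_closure_single {α : Type*} (D : α →₀ ℤ) :
    D ∈ AddSubgroup.closure ((Finsupp.single · 1) '' (D.support : Set α)) := by
  have sum_mem_closure : D.sum (fun a m => m • Finsupp.single a (1 : ℤ)) ∈
      AddSubgroup.closure ((Finsupp.single · 1) '' (D.support : Set α)) :=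
    sum_mem fun a ha => zsmul_mem
      (AddSubgroup.subset_closure (Set.mem_image_of_mem (Finsupp.single · 1) ha)) (D a)
  simpa using sum_mem_closure

lemma exists_add_mem_of_mem_closure {A : Type*} [AddCommGroup A] {N : AddSubgroup A} {E s : Set A}
    (hE₀ : 0 ∈ E) (hE : ∀ R ∈ E, ∀ R' ∈ E, ∃ S ∈ E, R + R' + S ∈ N)
    (hs : ∀ x ∈ s, ∃ R ∈ E, x + R ∈ N) {x : A} (hx : x ∈ AddSubgroup.closure s) :
    ∃ R ∈ E, x + R ∈ N := by
  have flip : ∀ R ∈ E, ∃ S ∈ E, R + S ∈ N := fun R hR => by simpa using hE R hR 0 hE₀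
  induction hx using AddSubgroup.closure_induction with
  | mem x hx => exact hs x hx
  | zero => simpa using flip 0 hE₀
  | add x y _ _ ihx ihy =>
    obtain ⟨R, hR, hxR⟩ := ihx
    obtain ⟨R', hR', hyR'⟩ := ihy
    obtain ⟨S, hS, hRS⟩ := hE R hR R' hR'
    obtain ⟨S', hS', hSS'⟩ := flip S hS
    refine ⟨S', hS', ?_⟩
    convert N.add_mem (N.sub_mem (N.add_mem hxR hyR') hRS) hSS' using 1
    abel
  | neg x _ ihx =>
    obtain ⟨R, hR, hxR⟩ := ihx
    obtain ⟨S, hS, hRS⟩ := flip R hR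
    refine ⟨S, hS, ?_⟩
    convert N.sub_mem hRS hxR using 1
    abel

-- Modulo `N`, the assignment `e a / e b ↦ a / b` for `a, b ∈ V` is a homomorphism `ψ` on `H`, and
-- `ψ ∘ e` is the identity on the generators `s`.
lemma ker_le_of_fractions {G H : Type*} [CommGroup G] [CommGroup H] {e : G →* H} {N : Subgroup G}
    {V s : Set G} (hs : Subgroup.closure s = ⊤)
    (hV : ∀ y z, ∃ a ∈ V, ∃ b ∈ V, ∃ c ∈ V, e a = y * e b ∧ e b = z * e c)
    (hVN : ∀ a ∈ V, ∀ b ∈ V, ∀ a' ∈ V, ∀ b' ∈ V, e (a * b') = e (a' * b) →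
      a * b' / (a' * b) ∈ N)
    (hsN : ∀ w ∈ s, ∃ a ∈ V, ∃ b ∈ V, e a = e w * e b ∧ w * b / a ∈ N) : e.ker ≤ N := by
  have fraction : ∀ w, ∃ a ∈ V, ∃ b ∈ V, e a = e w * e b ∧ w * b / a ∈ N := fun w => by
    have hw : w ∈ Subgroup.closure s := hs ▸ Subgroup.mem_top w
    induction hw using Subgroup.closure_induction with
    | mem w hw => exact hsN w hw
    | one =>
      obtain ⟨a, ha, -⟩ := hV 1 1
      exact ⟨a, ha, a, ha, by simp, by simp⟩
    | mul w w' _ _ ih ih' =>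
      obtain ⟨a₁, ha₁, b₁, hb₁, he₁, hN₁⟩ := ih
      obtain ⟨a₂, ha₂, b₂, hb₂, he₂, hN₂⟩ := ih'
      obtain ⟨a, ha, b, hb, c, hc, hab, hbc⟩ := hV (e w) (e w')
      refine ⟨a, ha, c, hc, by rw [hab, hbc, map_mul, mul_assoc], ?_⟩
      have h₁ := hVN a₁ ha₁ b₁ hb₁ a ha b hb (by
        rw [map_mul, map_mul, he₁, hab, mul_right_comm])
      have h₂ := hVN a₂ ha₂ b₂ hb₂ b hb c hc (by
        rw [map_mul, map_mul, he₂, hbc, mul_right_comm])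
      convert N.mul_mem (N.mul_mem hN₁ hN₂) (N.mul_mem h₁ h₂) using 1
      rw [div_mul_div_comm, div_mul_div_comm, div_mul_div_comm, div_eq_div_iff_mul_eq_mul]
      ac_rfl
    | inv w _ ih =>
      obtain ⟨a, ha, b, hb, he, hN⟩ := ih
      refine ⟨b, hb, a, ha, by rw [he, map_inv, inv_mul_cancel_left], ?_⟩
      convert N.inv_mem hN using 1
      rw [inv_div, div_eq_div_iff_mul_eq_mul, mul_comm w⁻¹, mul_comm w, mul_left_comm,
        inv_mul_cancel_right, mul_comm]
  intro w hw
  obtain ⟨a, ha, b, hb, he, hN⟩ := fraction w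
  rw [MonoidHom.mem_ker.1 hw, one_mul] at he
  convert N.mul_mem hN (hVN a ha b hb b hb b hb (by rw [map_mul, map_mul, he])) using 1
  rw [div_mul_div_comm, eq_div_iff_mul_eq']
  ac_rfl

end Groups

section LinearAlgebra

open Module

variable {k E : Type*} [Field k] [AddCommGroup E] [Module k E]

lemma finrank_add_finrank_le_add_finrank_inf {A B M : Submodule k E} [FiniteDimensional k M]
    (hA : A ≤ M) (hB : B ≤ M) :
    finrank k A + finrank k B ≤ finrank k M + finrank k (A ⊓ B : Submodule k E) := by
  have := Submodule.finiteDimensional_of_le hA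
  have := Submodule.finiteDimensional_of_le hB
  rw [← Submodule.finrank_sup_add_finrank_inf_eq]
  exact Nat.add_le_add_right (Submodule.finrank_mono (sup_le hA hB)) _

lemma exists_mem_ne_zero_of_finrank_pos {A : Submodule k E} (h : 0 < finrank k A) :
    ∃ x ∈ A, x ≠ 0 :=
  A.exists_mem_ne_zero_of_ne_bot <| by
    rintro rfl
    simp at h

lemma finrank_map_mulLeft {R : Type*} [Ring R] [IsDomain R] [Algebra k R] {y : R} (hy : y ≠ 0)
    (A : Submodule k R) : finrank k (A.map (LinearMap.mulLeft k y)) = finrank k A :=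
  (Submodule.equivMapOfInjective _ (mul_right_injective₀ hy) A).finrank_eq.symm

end LinearAlgebra

section Degree

variable (k : Type*) [Field k] {Pt : Type*} (res : Pt → Type*)
  [∀ P, Field (res P)] [∀ P, Algebra k (res P)]

lemma divDeg_eq_sum (D : Pt →₀ ℤ) :
    divDeg k res D = D.sum fun P n => (Module.finrank k (res P) : ℤ) * n := by
  rw [divDeg, Finsupp.sum, finsum_eq_sum_of_support_subset]
  intro P hP
  simp only [Function.mem_support, ne_eq, mul_eq_zero, not_or] at hP
  simpa using hP.2

lemma divDeg_add (D E : Pt →₀ ℤ) :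
    divDeg k res (D + E) = divDeg k res D + divDeg k res E := by
  simp only [divDeg_eq_sum]
  exact Finsupp.sum_add_index' (by simp) (by intros; ring)

lemma divDeg_sub (D E : Pt →₀ ℤ) :
    divDeg k res (D - E) = divDeg k res D - divDeg k res E := by
  rw [eq_sub_iff_add_eq, ← divDeg_add, sub_add_cancel]

lemma divDeg_single (P : Pt) (n : ℤ) :
    divDeg k res (Finsupp.single P n) = Module.finrank k (res P) * n := by
  rw [divDeg_eq_sum, Finsupp.sum_single_index (by simp)]

lemma divDeg_single_of_finrank_eq_one {P : Pt} (hP : Module.finrank k (res P) = 1) (n : ℤ) :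
    divDeg k res (Finsupp.single P n) = n := by
  rw [divDeg_single, hP, Nat.cast_one, one_mul]

lemma divDeg_nonneg {D : Pt →₀ ℤ} (hD : 0 ≤ D) : 0 ≤ divDeg k res D :=
  finsum_nonneg fun P => mul_nonneg (by positivity) (hD P)

lemma divDeg_mono {D E : Pt →₀ ℤ} (h : D ≤ E) : divDeg k res D ≤ divDeg k res E := by
  have := divDeg_nonneg k res (sub_nonneg.2 h)
  rw [divDeg_sub] at this
  linarith

lemma finrank_le_divDeg {D : Pt →₀ ℤ} (hD : 0 ≤ D)
    {P : Pt} (hP : D P ≠ 0) : (Module.finrank k (res P) : ℤ) ≤ divDeg k res D := by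
  have one_le : 1 ≤ D P := Int.add_one_le_iff.2 (lt_of_le_of_ne (hD P) hP.symm)
  have single_le : Finsupp.single P 1 ≤ D := by
    classical
    intro Q
    rw [Finsupp.single_apply]
    split_ifs with hQ
    · exact hQ ▸ one_le
    · exact hD Q
  simpa [divDeg_single] using divDeg_mono k res single_le

end Degree

namespace IsProjCurve

open Module
open Finsupp (single)

section AffinePoints

variable {k F : Type*} [Field k] [Field F] {Pt : Type*} {res : Pt → Type*} [∀ P, Field (res P)]
  [∀ P, Algebra k (res P)] {ord : Pt → F → ℤ} {O : Pt}

/-- The closed points of degree `d` other than `O`. -/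
abbrev AffinePoint (k : Type*) [Field k] {Pt : Type*} (res : Pt → Type*) [∀ P, Field (res P)]
    [∀ P, Algebra k (res P)] (O : Pt) (d : ℕ) :=
  {P : Pt // P ≠ O ∧ finrank k (res P) = d}

lemma single_apply_affinePoint {d : ℕ} (P : AffinePoint k res O d) (m : ℤ) :
    single O m P.1 = 0 := Finsupp.single_eq_of_ne P.2.1

lemma divDeg_single_lt {n : ℕ} (hO : finrank k (res O) = 1) (P : AffinePoint k res O (n + 1)) :
    divDeg k res (single O (n : ℤ)) < finrank k (res P.1) := by
  rw [divDeg_single_of_finrank_eq_one k res hO, P.2.2]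
  omega

/-- A function `π` whose divisor is `P` up to `O` and points of degree at most `n`, where `P` has
degree `n + 1`. -/
def IsParameter (ord : Pt → F → ℤ) {n : ℕ} (P : AffinePoint k res O (n + 1)) (π : Fˣ) : Prop :=
  ∀ Q ≠ O, n < finrank k (res Q) → ord Q (π : F) = single P.1 1 Q

lemma IsParameter.ord_affinePoint {n : ℕ} {P : AffinePoint k res O (n + 1)} {π : Fˣ}
    (hπ : IsParameter ord P π) (Q : AffinePoint k res O (n + 1)) :
    ord Q (π : F) = single P.1 1 Q.1 :=
  hπ Q Q.2.1 (by rw [Q.2.2]; exact n.lt_succ_self)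

open Classical in
/-- The components of the tame symbol `T` at the closed points of degree `d` other than `O`. -/
def affineTame (k : Type*) [Field k] {F Pt : Type*} [Field F] {res : Pt → Type*}
    [∀ P, Field (res P)] [∀ P, Algebra k (res P)] (T : K2 F →+ Π₀ P : Pt, Additive (res P)ˣ)
    (O : Pt) (d : ℕ) : K2 F →+ Π₀ P : AffinePoint k res O d, Additive (res P.1)ˣ :=
  (DFinsupp.subtypeDomainAddMonoidHom _ _).comp T

lemma affineTame_apply {T : K2 F →+ Π₀ P : Pt, Additive (res P)ˣ} {d : ℕ} (x : K2 F)
    (P : AffinePoint k res O d) : affineTame k T O d x P = T x P := rfl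

end AffinePoints

variable {k F : Type*} [Field k] [Field F] [Algebra k F]
  {Pt : Type*} {res : Pt → Type*} [∀ P, Field (res P)] [∀ P, Algebra k (res P)]
  {ord : Pt → F → ℤ} {ev : ∀ P, F → res P}
  {L : (Pt →₀ ℤ) → Submodule k F} {t : ℕ}

lemma ord_one (hC : IsProjCurve k F res ord ev L t) (P : Pt) : ord P 1 = 0 := by
  simpa using hC.ord_mul P 1 1 one_ne_zero one_ne_zero

/-- The divisor of a nonzero rational function. -/
def divisor (hC : IsProjCurve k F res ord ev L t) (u : Fˣ) : Pt →₀ ℤ :=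
  Finsupp.ofSupportFinite (fun P => ord P u) (hC.support_finite u u.ne_zero)

@[simp]
lemma divisor_apply (hC : IsProjCurve k F res ord ev L t) (u : Fˣ) (P : Pt) :
    hC.divisor u P = ord P u := rfl

lemma divisor_mul (hC : IsProjCurve k F res ord ev L t) (u v : Fˣ) :
    hC.divisor (u * v) = hC.divisor u + hC.divisor v := by
  ext P
  simpa using hC.ord_mul P u v u.ne_zero v.ne_zero

lemma divisor_one (hC : IsProjCurve k F res ord ev L t) : hC.divisor 1 = 0 := by
  ext P
  simpa using hC.ord_one P

lemma divisor_inv (hC : IsProjCurve k F res ord ev L t) (u : Fˣ) :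
    hC.divisor u⁻¹ = -hC.divisor u := by
  rw [eq_neg_iff_add_eq_zero, ← divisor_mul, inv_mul_cancel, divisor_one]

lemma divisor_div (hC : IsProjCurve k F res ord ev L t) (u v : Fˣ) :
    hC.divisor (u / v) = hC.divisor u - hC.divisor v := by
  rw [div_eq_mul_inv, divisor_mul, divisor_inv, sub_eq_add_neg]

lemma divDeg_divisor (hC : IsProjCurve k F res ord ev L t) (u : Fˣ) :
    divDeg k res (hC.divisor u) = 0 :=
  hC.degree_formula u u.ne_zero

lemma coe_mem_L (hC : IsProjCurve k F res ord ev L t) {D : Pt →₀ ℤ} {u : Fˣ} :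
    (u : F) ∈ L D ↔ 0 ≤ D + hC.divisor u := by
  rw [hC.mem_L, Finsupp.le_def]
  simp

lemma mul_mem_L (hC : IsProjCurve k F res ord ev L t) {D E : Pt →₀ ℤ} {f g : F}
    (hf : f ∈ L D) (hg : g ∈ L E) : f * g ∈ L (D + E) := by
  rw [hC.mem_L] at *
  intro hfg P
  obtain ⟨hf₀, hg₀⟩ := mul_ne_zero_iff.1 hfg
  rw [hC.ord_mul P f g hf₀ hg₀, Finsupp.add_apply, add_add_add_comm]
  exact add_nonneg (hf hf₀ P) (hg hg₀ P)

lemma mul_mem_L_single (hC : IsProjCurve k F res ord ev L t) {O : Pt} {l m : ℤ} {f g : F}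
    (hf : f ∈ L (single O l)) (hg : g ∈ L (single O m)) : f * g ∈ L (single O (l + m)) := by
  rw [Finsupp.single_add]
  exact hC.mul_mem_L hf hg

lemma L_mono (hC : IsProjCurve k F res ord ev L t) : Monotone L := fun D E h f hf => by
  rw [hC.mem_L] at *
  exact fun hf₀ P => (hf hf₀ P).trans (add_le_add_left (h P) _)

lemma L_single_mono (hC : IsProjCurve k F res ord ev L t) {O : Pt} {m n : ℤ} (h : m ≤ n) :
    L (single O m) ≤ L (single O n) :=
  hC.L_mono (Finsupp.single_mono h)

lemma ord_nonneg_of_mem_L (hC : IsProjCurve k F res ord ev L t) {D : Pt →₀ ℤ} {f : F}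
    (hf : f ∈ L D) {P : Pt} (hP : D P = 0) (hf₀ : f ≠ 0) : 0 ≤ ord P f := by
  simpa [hP] using (hC.mem_L D f).1 hf hf₀ P

lemma exists_mem_L (hC : IsProjCurve k F res ord ev L t) {D : Pt →₀ ℤ}
    (hD : (t : ℤ) ≤ divDeg k res D) : ∃ u : Fˣ, (u : F) ∈ L D := by
  have riemann := hC.rr_ineq D
  obtain ⟨f, hf, hf₀⟩ := exists_mem_ne_zero_of_finrank_pos (A := L D) (by omega)
  exact ⟨Units.mk0 f hf₀, hf⟩

lemma finrank_le_of_mem_L (hC : IsProjCurve k F res ord ev L t) {D : Pt →₀ ℤ} {u : Fˣ}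
    (hu : (u : F) ∈ L D) {P : Pt} (hP : D P + ord P (u : F) ≠ 0) :
    (finrank k (res P) : ℤ) ≤ divDeg k res D := by
  have := finrank_le_divDeg k res (hC.coe_mem_L.1 hu) (P := P) hP
  rwa [divDeg_add, divDeg_divisor, add_zero] at this

lemma finrank_add_finrank_le_of_mem_L (hC : IsProjCurve k F res ord ev L t) {D : Pt →₀ ℤ}
    {u : Fˣ} (hu : (u : F) ∈ L D) {P Q : Pt} (hP : D P + ord P (u : F) ≠ 0)
    (hQ : D Q + ord Q (u : F) ≠ single P 1 Q) :
    (finrank k (res P) + finrank k (res Q) : ℤ) ≤ divDeg k res D := by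
  classical
  have effective := hC.coe_mem_L.1 hu
  have sub_effective : 0 ≤ D + hC.divisor u - single P 1 := fun R => by
    have hR : 0 ≤ D R + ord R (u : F) := effective R
    rcases eq_or_ne R P with rfl | hRP
    · simpa using Int.add_one_le_iff.2 (hR.lt_of_ne' hP)
    · simpa [Finsupp.single_eq_of_ne hRP] using hR
  have := finrank_le_divDeg k res sub_effective (P := Q) (sub_ne_zero.2 hQ)
  rw [divDeg_sub, divDeg_add, divDeg_divisor, divDeg_single] at this
  omega

/-- The group of functions regular and invertible at `P`. -/
def unitsAt (hC : IsProjCurve k F res ord ev L t) (P : Pt) : Subgroup Fˣ where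
  carrier := {u | ord P u = 0}
  one_mem' := hC.ord_one P
  mul_mem' {u v} hu hv := by
    rw [Set.mem_ofPred_eq, ← hC.divisor_apply, divisor_mul]
    exact (congrArg₂ (· + ·) hu hv).trans (add_zero 0)
  inv_mem' {u} hu := by
    rw [Set.mem_ofPred_eq, ← hC.divisor_apply, divisor_inv]
    exact neg_eq_zero.2 hu

lemma mem_unitsAt (hC : IsProjCurve k F res ord ev L t) {P : Pt} {u : Fˣ} :
    u ∈ hC.unitsAt P ↔ ord P (u : F) = 0 := Iff.rfl

lemma div_mem_unitsAt (hC : IsProjCurve k F res ord ev L t) {P : Pt} {u v : Fˣ} :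
    u / v ∈ hC.unitsAt P ↔ ord P (u : F) = ord P (v : F) := by
  rw [mem_unitsAt, ← hC.divisor_apply, divisor_div]
  exact sub_eq_zero

/-- The functions whose divisor is supported on `O` and on points of degree at most `n`. -/
def supportedUnits (hC : IsProjCurve k F res ord ev L t) (O : Pt) (n : ℕ) : Subgroup Fˣ :=
  ⨅ (Q : Pt) (_ : Q ≠ O) (_ : n < finrank k (res Q)), hC.unitsAt Q

lemma mem_supportedUnits (hC : IsProjCurve k F res ord ev L t) {O : Pt} {n : ℕ} {u : Fˣ} :
    u ∈ hC.supportedUnits O n ↔ ∀ Q ≠ O, n < finrank k (res Q) → u ∈ hC.unitsAt Q := by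
  simp only [supportedUnits, Subgroup.mem_iInf]

lemma supportedUnits_mono (hC : IsProjCurve k F res ord ev L t) (O : Pt) :
    Monotone (hC.supportedUnits O) := fun _ _ hmn _ hu =>
  hC.mem_supportedUnits.2 fun Q hQ hn => hC.mem_supportedUnits.1 hu Q hQ (hmn.trans_lt hn)

section RationalPoint

variable {O : Pt}

lemma mem_supportedUnits_of_mem_L (hC : IsProjCurve k F res ord ev L t)
    (hO : finrank k (res O) = 1) {m : ℤ} {n : ℕ} (hmn : m ≤ n) {u : Fˣ}
    (hu : (u : F) ∈ L (single O m)) : u ∈ hC.supportedUnits O n :=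
  hC.mem_supportedUnits.2 fun Q hQ hn => by
    by_contra h
    have := hC.finrank_le_of_mem_L hu (P := Q)
      (by rwa [Finsupp.single_eq_of_ne hQ, zero_add])
    rw [divDeg_single_of_finrank_eq_one k res hO] at this
    omega

-- For `n = 0` the point `O` is not of degree at most `n`, but then a function supported on `O`
-- alone has trivial divisor by the degree formula.
lemma finrank_le_of_mem_supportedUnits (hC : IsProjCurve k F res ord ev L t)
    (hO : finrank k (res O) = 1) {n : ℕ} {u : Fˣ} (hu : u ∈ hC.supportedUnits O n) {P : Pt}
    (hP : ord P (u : F) ≠ 0) : finrank k (res P) ≤ n := by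
  by_contra! hn
  obtain rfl : P = O := by_contra fun hPO => hP (hC.mem_supportedUnits.1 hu P hPO hn)
  have divisor_eq : hC.divisor u = single P (ord P (u : F)) := by
    ext Q
    rcases eq_or_ne Q P with rfl | hQ
    · simp
    · have := hC.finiteDimensional_res Q
      rw [Finsupp.single_eq_of_ne hQ]
      exact hC.mem_supportedUnits.1 hu Q hQ (by have := finrank_pos (R := k) (M := res Q); omega)
  have degree_formula := hC.divDeg_divisor u
  rw [divisor_eq, divDeg_single_of_finrank_eq_one k res hO] at degree_formula
  exact hP degree_formula

lemma symbol_mem_Fsub (hC : IsProjCurve k F res ord ev L t) (hO : finrank k (res O) = 1)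
    {n : ℕ} {u v : Fˣ} (hu : u ∈ hC.supportedUnits O n) (hv : v ∈ hC.supportedUnits O n) :
    symbol u v ∈ Fsub k res ord n :=
  AddSubgroup.subset_closure ⟨u, v, fun _ => hC.finrank_le_of_mem_supportedUnits hO hu,
    fun _ => hC.finrank_le_of_mem_supportedUnits hO hv, rfl⟩

lemma mem_L_of_divisor_eq (hC : IsProjCurve k F res ord ev L t) {u : Fˣ} {S : Pt →₀ ℤ} {m : ℤ}
    (hS : 0 ≤ S) (hu : S = hC.divisor u + single O m) : (u : F) ∈ L (single O m) := by
  rwa [hC.coe_mem_L, add_comm, ← hu]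

lemma exists_add_eq_divisor_add_single (hC : IsProjCurve k F res ord ev L t)
    (hO : finrank k (res O) = 1) (D : Pt →₀ ℤ) :
    ∃ (S : Pt →₀ ℤ) (u : Fˣ), 0 ≤ S ∧ divDeg k res S = t ∧
      D + S = hC.divisor u + single O (divDeg k res D + t) := by
  obtain ⟨u, hu⟩ := hC.exists_mem_L (D := single O (divDeg k res D + t) - D) (by
    rw [divDeg_sub, divDeg_single_of_finrank_eq_one k res hO, add_sub_cancel_left])
  refine ⟨_, u, hC.coe_mem_L.1 hu, ?_, by abel⟩
  rw [divDeg_add, divDeg_sub, divDeg_single_of_finrank_eq_one k res hO, divDeg_divisor, add_zero,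
    add_sub_cancel_left]

/-- The divisors that are equivalent to a multiple of `O` by means of a function in `W`. -/
def equivMultiples (hC : IsProjCurve k F res ord ev L t) (O : Pt) (W : Subgroup Fˣ) :
    AddSubgroup (Pt →₀ ℤ) where
  carrier := {D | ∃ f ∈ W, ∃ m : ℤ, D = hC.divisor f + single O m}
  zero_mem' := ⟨1, W.one_mem, 0, by rw [divisor_one, Finsupp.single_zero, add_zero]⟩
  add_mem' := by
    rintro _ _ ⟨f, hf, l, rfl⟩ ⟨g, hg, m, rfl⟩
    exact ⟨f * g, W.mul_mem hf hg, l + m, by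
      rw [divisor_mul, Finsupp.single_add, add_add_add_comm]⟩
  neg_mem' := by
    rintro _ ⟨f, hf, m, rfl⟩
    exact ⟨f⁻¹, W.inv_mem hf, -m, by rw [divisor_inv, Finsupp.single_neg, neg_add]⟩

lemma exists_add_mem_equivMultiples (hC : IsProjCurve k F res ord ev L t)
    (hO : finrank k (res O) = 1) {W : Subgroup Fˣ} {m : ℤ}
    (hW : ∀ u : Fˣ, (u : F) ∈ L (single O m) → u ∈ W) {D : Pt →₀ ℤ} (hD : 0 ≤ D)
    (hDm : divDeg k res D + t ≤ m) :
    ∃ S ∈ {S : Pt →₀ ℤ | 0 ≤ S ∧ divDeg k res S ≤ t}, D + S ∈ hC.equivMultiples O W := by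
  obtain ⟨S, u, hS, hSt, hu⟩ := hC.exists_add_eq_divisor_add_single hO D
  have hum := hC.mem_L_of_divisor_eq (add_nonneg hD hS) hu
  exact ⟨S, ⟨hS, hSt.le⟩, u, hW u (hC.L_single_mono hDm hum), _, hu⟩

lemma exists_single_add_mem_equivMultiples (hC : IsProjCurve k F res ord ev L t)
    (hO : finrank k (res O) = 1) {n : ℕ} (hn : t ≤ n) {W : Subgroup Fˣ}
    (hW : ∀ u ∈ hC.supportedUnits O n, (u : F) ∈ L (single O (n + t : ℤ)) → u ∈ W) {Q : Pt}
    (hQ : Q ≠ O → finrank k (res Q) ≤ n) :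
    ∃ S ∈ {S : Pt →₀ ℤ | 0 ≤ S ∧ divDeg k res S ≤ t},
      single Q 1 + S ∈ hC.equivMultiples O W := by
  rcases eq_or_ne Q O with rfl | hQO
  · exact ⟨0, ⟨le_rfl, by simp [divDeg]⟩, 1, W.one_mem, 1, by rw [divisor_one, add_comm]⟩
  obtain ⟨S, u, hS, hSt, hu⟩ := hC.exists_add_eq_divisor_add_single hO (single Q 1)
  refine ⟨S, ⟨hS, hSt.le⟩, u, hW u (hC.mem_supportedUnits.2 fun P hPO hP => ?_) ?_, _, hu⟩
  · have hSP : S P = 0 := by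
      by_contra hSP
      have := finrank_le_divDeg k res hS hSP
      omega
    have hPQ : P ≠ Q := by
      rintro rfl
      exact absurd (hQ hPO) hP.not_ge
    have ord_eq := DFunLike.congr_fun hu P
    simpa [mem_unitsAt, hSP, Finsupp.single_eq_of_ne hPQ, Finsupp.single_eq_of_ne hPO, eq_comm]
      using ord_eq
  · have hQS : (0 : Pt →₀ ℤ) ≤ single Q 1 + S := add_nonneg (Finsupp.single_nonneg.2 one_pos.le) hS
    refine hC.L_single_mono ?_ (hC.mem_L_of_divisor_eq hQS hu)
    have := hQ hQO
    rw [divDeg_single]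
    omega

lemma supportedUnits_le_of_forall_mem_L (hC : IsProjCurve k F res ord ev L t)
    (hO : finrank k (res O) = 1) {n : ℕ} (hn : 3 * t ≤ n) {W : Subgroup Fˣ}
    (hW : ∀ u ∈ hC.supportedUnits O n, (u : F) ∈ L (single O (n + t : ℤ)) → u ∈ W) :
    hC.supportedUnits O n ≤ W := fun u hu => by
  have hnW : ∀ w : Fˣ, (w : F) ∈ L (single O (n : ℤ)) → w ∈ W := fun w hw =>
    hW w (hC.mem_supportedUnits_of_mem_L hO le_rfl hw) (hC.L_single_mono (by omega) hw)
  obtain ⟨S, ⟨hS, hSt⟩, f, hf, m, hfm⟩ := exists_add_mem_of_mem_closure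
    (E := {S : Pt →₀ ℤ | 0 ≤ S ∧ divDeg k res S ≤ t}) (N := hC.equivMultiples O W)
    ⟨le_rfl, by simp [divDeg]⟩
    (fun R hR R' hR' => hC.exists_add_mem_equivMultiples hO hnW (add_nonneg hR.1 hR'.1) (by
      have := hR.2
      have := hR'.2
      rw [divDeg_add]
      omega))
    (by
      rintro _ ⟨Q, hQ, rfl⟩
      exact hC.exists_single_add_mem_equivMultiples hO (by omega) hW fun _ =>
        hC.finrank_le_of_mem_supportedUnits hO hu (Finsupp.mem_support_iff.1 hQ))
    (mem_closure_single (hC.divisor u))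
  have hfu : S = hC.divisor (f / u) + single O m := by
    rw [divisor_div, sub_add_eq_add_sub, ← hfm, add_sub_cancel_left]
  have hm : divDeg k res S = m := by
    rw [hfu, divDeg_add, divDeg_divisor, zero_add, divDeg_single_of_finrank_eq_one k res hO]
  have hfuW : f / u ∈ W :=
    hnW _ (hC.L_single_mono (by omega) (hC.mem_L_of_divisor_eq hS hfu))
  simpa using W.div_mem hf hfuW

lemma closure_supportedUnits_mem_L (hC : IsProjCurve k F res ord ev L t)
    (hO : finrank k (res O) = 1) {n : ℕ} (hn : 3 * t ≤ n) :
    Subgroup.closure {u : hC.supportedUnits O n | ((u : Fˣ) : F) ∈ L (single O (n + t : ℤ))} =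
      ⊤ := by
  rw [← top_le_iff, ← (hC.supportedUnits O n).map_subtype_le_map_subtype, ← MonoidHom.range_eq_map,
    Subgroup.range_subtype]
  exact hC.supportedUnits_le_of_forall_mem_L hO hn fun u hu huL =>
    ⟨⟨u, hu⟩, Subgroup.subset_closure huL, rfl⟩

/-- Evaluation at a point `P` at which the sections of `O(D)` are regular. -/
def evLinear (hC : IsProjCurve k F res ord ev L t) {D : Pt →₀ ℤ} {P : Pt} (hDP : D P = 0) :
    L D →ₗ[k] res P where
  toFun f := ev P f
  map_add' f g := by
    rcases eq_or_ne (f : F) 0 with hf | hf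
    · simp [hf, hC.ev_zero]
    rcases eq_or_ne (g : F) 0 with hg | hg
    · simp [hg, hC.ev_zero]
    exact hC.ev_add P f g hf hg (hC.ord_nonneg_of_mem_L f.2 hDP hf)
      (hC.ord_nonneg_of_mem_L g.2 hDP hg)
  map_smul' c f := by
    rcases eq_or_ne (f : F) 0 with hf | hf
    · simp [hf, hC.ev_zero]
    rcases eq_or_ne c 0 with rfl | hc
    · simp [hC.ev_zero]
    simp only [SetLike.val_smul, Algebra.smul_def, RingHom.id_apply]
    rw [hC.ev_mul P _ _ (by simpa using hc) hf (hC.ord_algebraMap P c hc).ge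
      (hC.ord_nonneg_of_mem_L f.2 hDP hf), hC.ev_algebraMap]

lemma evLinear_apply (hC : IsProjCurve k F res ord ev L t) {D : Pt →₀ ℤ} {P : Pt}
    (hDP : D P = 0) (f : L D) : hC.evLinear hDP f = ev P f := rfl

lemma evLinear_injective (hC : IsProjCurve k F res ord ev L t) {D : Pt →₀ ℤ} {P : Pt}
    (hDP : D P = 0) (hD : divDeg k res D < finrank k (res P)) :
    Function.Injective (hC.evLinear hDP) := by
  refine (injective_iff_map_eq_zero _).2 fun f hf => by_contra fun hf₀ => hD.not_ge ?_
  have hf₀ : (f : F) ≠ 0 := by simpa using hf₀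
  have ord_pos := (hC.ev_eq_zero_iff P f hf₀ (hC.ord_nonneg_of_mem_L f.2 hDP hf₀)).1 hf
  refine hC.finrank_le_of_mem_L (u := Units.mk0 _ hf₀) f.2 ?_
  rw [hDP, zero_add]
  exact ord_pos.ne'

lemma le_finrank_range_evLinear (hC : IsProjCurve k F res ord ev L t) {D : Pt →₀ ℤ} {P : Pt}
    (hDP : D P = 0) (hD : divDeg k res D < finrank k (res P)) :
    divDeg k res D + 1 - t ≤ finrank k (hC.evLinear hDP).range := by
  rw [LinearMap.finrank_range_of_inj (hC.evLinear_injective hDP hD)]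
  exact hC.rr_ineq D

lemma exists_ev_eq_of_mem_range (hC : IsProjCurve k F res ord ev L t) {D : Pt →₀ ℤ} {P : Pt}
    (hDP : D P = 0) {x : res P} (hx : x ∈ (hC.evLinear hDP).range) (hx₀ : x ≠ 0) :
    ∃ u : Fˣ, (u : F) ∈ L D ∧ ev P u = x := by
  obtain ⟨f, rfl⟩ := hx
  refine ⟨Units.mk0 (f : F) fun hf => hx₀ ?_, f.2, rfl⟩
  rw [evLinear_apply, hf, hC.ev_zero]

lemma exists_ev_eq_mul_ev (hC : IsProjCurve k F res ord ev L t) {D E : Pt →₀ ℤ} {P : Pt}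
    (hDP : D P = 0) (hEP : E P = 0) (hD : divDeg k res D < finrank k (res P))
    (hE : divDeg k res E < finrank k (res P))
    (hDE : finrank k (res P) + 2 * t < divDeg k res D + divDeg k res E + 2) {y : res P}
    (hy : y ≠ 0) :
    ∃ a b : Fˣ, (a : F) ∈ L D ∧ (b : F) ∈ L E ∧ ev P a = y * ev P b := by
  have := hC.finiteDimensional_res P
  have inf_pos := finrank_add_finrank_le_add_finrank_inf (M := ⊤)
    (le_top (a := (hC.evLinear hDP).range))
    (le_top (a := (hC.evLinear hEP).range.map (LinearMap.mulLeft k y)))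
  rw [finrank_top, finrank_map_mulLeft hy] at inf_pos
  have := hC.le_finrank_range_evLinear hDP hD
  have := hC.le_finrank_range_evLinear hEP hE
  obtain ⟨_, ⟨hx, z, hz, rfl⟩, hyz₀⟩ := exists_mem_ne_zero_of_finrank_pos
    (A := (hC.evLinear hDP).range ⊓ (hC.evLinear hEP).range.map (LinearMap.mulLeft k y))
    (by omega)
  obtain ⟨a, ha, hax⟩ := hC.exists_ev_eq_of_mem_range hDP hx hyz₀
  obtain ⟨b, hb, rfl⟩ := hC.exists_ev_eq_of_mem_range hEP hz (right_ne_zero_of_mul hyz₀)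
  exact ⟨a, b, ha, hb, hax⟩

lemma exists_ev_eq_mul_ev_and_ev_eq_mul_ev (hC : IsProjCurve k F res ord ev L t) {D : Pt →₀ ℤ}
    {P : Pt} (hDP : D P = 0) (hD : divDeg k res D < finrank k (res P))
    (h3D : 2 * finrank k (res P) + 3 * t < 3 * divDeg k res D + 3) {y z : res P} (hy : y ≠ 0)
    (hz : z ≠ 0) :
    ∃ a b c : Fˣ, (a : F) ∈ L D ∧ (b : F) ∈ L D ∧ (c : F) ∈ L D ∧
      ev P a = y * ev P b ∧ ev P b = z * ev P c := by
  have := hC.finiteDimensional_res P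
  let V := (hC.evLinear hDP).range
  let yV := V.map (LinearMap.mulLeft k y)
  let yzV := V.map (LinearMap.mulLeft k (y * z))
  have inf_pos := finrank_add_finrank_le_add_finrank_inf (M := ⊤) (le_top (a := V))
    (le_top (a := yV))
  have inf_inf_pos := finrank_add_finrank_le_add_finrank_inf (M := ⊤) (le_top (a := V ⊓ yV))
    (le_top (a := yzV))
  rw [finrank_top, finrank_map_mulLeft hy] at inf_pos
  rw [finrank_top, finrank_map_mulLeft (mul_ne_zero hy hz)] at inf_inf_pos
  have : divDeg k res D + 1 - t ≤ finrank k V := hC.le_finrank_range_evLinear hDP hD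
  obtain ⟨x, ⟨⟨hx, v, hv, hyv⟩, w, hw, hyzw⟩, hx₀⟩ :=
    exists_mem_ne_zero_of_finrank_pos (A := V ⊓ yV ⊓ yzV) (by omega)
  have hyv : x = y * v := hyv.symm
  have hvw : v = z * w := mul_left_cancel₀ hy (by rw [← mul_assoc, ← hyv]; exact hyzw.symm)
  have hv₀ : v ≠ 0 := right_ne_zero_of_mul (hyv ▸ hx₀)
  obtain ⟨a, ha, rfl⟩ := hC.exists_ev_eq_of_mem_range hDP hx hx₀
  obtain ⟨b, hb, rfl⟩ := hC.exists_ev_eq_of_mem_range hDP hv hv₀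
  obtain ⟨c, hc, rfl⟩ := hC.exists_ev_eq_of_mem_range hDP hw (right_ne_zero_of_mul (hvw ▸ hv₀))
  exact ⟨a, b, c, ha, hb, hc, hyv, hvw⟩

/-- The value at `P` of the functions regular and invertible at `P`. -/
def evUnits (hC : IsProjCurve k F res ord ev L t) (P : Pt) : hC.unitsAt P →* (res P)ˣ :=
  MonoidHom.mk' (fun u => Units.mk0 (ev P (u : Fˣ)) fun hu =>
      ((hC.ev_eq_zero_iff P _ (u : Fˣ).ne_zero u.2.ge).1 hu).ne' u.2)
    fun u v => Units.ext <|
      hC.ev_mul P (u : Fˣ) (v : Fˣ) (u : Fˣ).ne_zero (v : Fˣ).ne_zero u.2.ge v.2.ge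

lemma supportedUnits_le_unitsAt (hC : IsProjCurve k F res ord ev L t) {n : ℕ}
    (P : AffinePoint k res O (n + 1)) : hC.supportedUnits O n ≤ hC.unitsAt P.1 := fun _ hu =>
  hC.mem_supportedUnits.1 hu P P.2.1 (by rw [P.2.2]; exact n.lt_succ_self)

/-- The value at a point of degree `n + 1` of the functions supported in degree at most `n`. -/
def residueHom (hC : IsProjCurve k F res ord ev L t) {n : ℕ} (P : AffinePoint k res O (n + 1)) :
    hC.supportedUnits O n →* (res P.1)ˣ :=
  (hC.evUnits P).comp (Subgroup.inclusion (hC.supportedUnits_le_unitsAt P))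

lemma exists_residueHom_eq_mul (hC : IsProjCurve k F res ord ev L t)
    (hO : finrank k (res O) = 1) {n : ℕ} (hn : 3 * t ≤ n) (P : AffinePoint k res O (n + 1))
    (y : (res P.1)ˣ) :
    ∃ a b : hC.supportedUnits O n, ((a : Fˣ) : F) ∈ L (single O (n : ℤ)) ∧
      ((b : Fˣ) : F) ∈ L (single O (2 * t : ℤ)) ∧
      hC.residueHom P a = y * hC.residueHom P b := by
  obtain ⟨a, b, ha, hb, hab⟩ := hC.exists_ev_eq_mul_ev (single_apply_affinePoint P n)
    (single_apply_affinePoint P (2 * t)) (divDeg_single_lt hO P)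
    (by rw [divDeg_single_of_finrank_eq_one k res hO, P.2.2]; omega)
    (by simp only [divDeg_single_of_finrank_eq_one k res hO, P.2.2]; omega) y.ne_zero
  exact ⟨⟨a, hC.mem_supportedUnits_of_mem_L hO le_rfl ha⟩,
    ⟨b, hC.mem_supportedUnits_of_mem_L hO (by omega) hb⟩, ha, hb, Units.ext hab⟩

lemma residueHom_surjective (hC : IsProjCurve k F res ord ev L t) (hO : finrank k (res O) = 1)
    {n : ℕ} (hn : 3 * t ≤ n) (P : AffinePoint k res O (n + 1)) :
    Function.Surjective (hC.residueHom P) := fun y => by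
  obtain ⟨a, b, -, -, hab⟩ := hC.exists_residueHom_eq_mul hO hn P y
  exact ⟨a / b, by rw [map_div, hab, mul_div_cancel_right]⟩

lemma exists_residueHom_eq_mul_and_eq_mul (hC : IsProjCurve k F res ord ev L t)
    (hO : finrank k (res O) = 1) {n : ℕ} (hn : 3 * t ≤ n) (P : AffinePoint k res O (n + 1))
    (y z : (res P.1)ˣ) :
    ∃ a ∈ {u : hC.supportedUnits O n | ((u : Fˣ) : F) ∈ L (single O (n : ℤ))},
      ∃ b ∈ {u : hC.supportedUnits O n | ((u : Fˣ) : F) ∈ L (single O (n : ℤ))},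
      ∃ c ∈ {u : hC.supportedUnits O n | ((u : Fˣ) : F) ∈ L (single O (n : ℤ))},
      hC.residueHom P a = y * hC.residueHom P b ∧ hC.residueHom P b = z * hC.residueHom P c := by
  obtain ⟨a, b, c, ha, hb, hc, hab, hbc⟩ := hC.exists_ev_eq_mul_ev_and_ev_eq_mul_ev
    (single_apply_affinePoint P n) (divDeg_single_lt hO P)
    (by rw [divDeg_single_of_finrank_eq_one k res hO, P.2.2]; omega) y.ne_zero z.ne_zero
  have mem_supportedUnits {u : Fˣ} (hu : (u : F) ∈ L (single O (n : ℤ))) :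
      u ∈ hC.supportedUnits O n := hC.mem_supportedUnits_of_mem_L hO le_rfl hu
  exact ⟨⟨a, mem_supportedUnits ha⟩, ha, ⟨b, mem_supportedUnits hb⟩, hb,
    ⟨c, mem_supportedUnits hc⟩, hc, Units.ext hab, Units.ext hbc⟩

-- Another zero of `u` of degree greater than `n`, or a multiple zero at `P`, would force
-- `m ≥ 2 (n + 1)`.
lemma isParameter_of_mem_L (hC : IsProjCurve k F res ord ev L t) (hO : finrank k (res O) = 1)
    {n : ℕ} {P : AffinePoint k res O (n + 1)} {m : ℤ} (hm : m < 2 * (n + 1)) {u : Fˣ}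
    (hu : (u : F) ∈ L (single O m)) (hPu : ord P (u : F) ≠ 0) : IsParameter ord P u := by
  intro Q hQ hn
  by_contra h
  have := hC.finrank_add_finrank_le_of_mem_L hu (P := P) (Q := Q)
    (by rwa [single_apply_affinePoint, zero_add]) (by rwa [Finsupp.single_eq_of_ne hQ, zero_add])
  rw [divDeg_single_of_finrank_eq_one k res hO, P.2.2] at this
  omega

lemma IsParameter.mem_supportedUnits (hC : IsProjCurve k F res ord ev L t) {n : ℕ}
    {P : AffinePoint k res O (n + 1)} {π : Fˣ} (hπ : IsParameter ord P π) :
    π ∈ hC.supportedUnits O (n + 1) :=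
  hC.mem_supportedUnits.2 fun Q hQ hn => by
    rw [hC.mem_unitsAt, hπ Q hQ (by omega), Finsupp.single_eq_of_ne]
    rintro rfl
    exact hn.ne' P.2.2

lemma div_mem_supportedUnits (hC : IsProjCurve k F res ord ev L t) {n : ℕ} {u v : Fˣ}
    (h : ∀ Q ≠ O, n < finrank k (res Q) → ord Q (u : F) = ord Q (v : F)) :
    u / v ∈ hC.supportedUnits O n :=
  hC.mem_supportedUnits.2 fun Q hQ hn => hC.div_mem_unitsAt.2 (h Q hQ hn)

lemma symbol_div_mem_Fsub (hC : IsProjCurve k F res ord ev L t) (hO : finrank k (res O) = 1)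
    {n : ℕ} {P : AffinePoint k res O (n + 1)} {π : Fˣ} (hπ : IsParameter ord P π) {x y : Fˣ}
    (hx : x ∈ hC.supportedUnits O n) (hy : y ∈ hC.supportedUnits O n) {m : ℤ}
    (hm : m < 2 * (n + 1)) (hxm : (x : F) ∈ L (single O m)) (hym : (y : F) ∈ L (single O m))
    (hxy : ev P x = ev P y) : symbol (x / y) π ∈ Fsub k res ord n := by
  rcases eq_or_ne (y : F) x with heq | hne
  · rw [Units.ext heq, div_self', symbol_one_left]
    exact AddSubgroup.zero_mem _
  have hz₀ : (y - x : F) ≠ 0 := sub_ne_zero.2 hne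
  let z : Fˣ := Units.mk0 _ hz₀
  have hzm : (z : F) ∈ L (single O m) := sub_mem hym hxm
  have ev_z : ev P z = 0 := by
    have := map_sub (hC.evLinear (single_apply_affinePoint P m)) ⟨_, hym⟩ ⟨_, hxm⟩
    rwa [evLinear_apply, evLinear_apply, evLinear_apply, hxy, sub_self] at this
  have ord_pos := (hC.ev_eq_zero_iff P z hz₀
    (hC.ord_nonneg_of_mem_L hzm (single_apply_affinePoint P m) hz₀)).1 ev_z
  have parameter_z := hC.isParameter_of_mem_L hO hm hzm ord_pos.ne'
  have hzπ : z / π ∈ hC.supportedUnits O n := hC.div_mem_supportedUnits fun Q hQ hn =>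
    (parameter_z Q hQ hn).trans (hπ Q hQ hn).symm
  have relation : ((x / y : Fˣ) * y + π * (z / π : Fˣ) : F) = y := by
    rw [← Units.val_mul, ← Units.val_mul, div_mul_cancel, mul_div_cancel, Units.val_mk0,
      add_sub_cancel]
  refine symbol_mem_of_mul_add_mul_eq relation
    (hC.symbol_mem_Fsub hO (div_mem hx hy) (div_mem hzπ hy)) ?_ ?_
  all_goals
    rw [div_self', symbol_one_left]
    exact AddSubgroup.zero_mem _

lemma ker_residueHom_le (hC : IsProjCurve k F res ord ev L t) (hO : finrank k (res O) = 1)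
    {n : ℕ} (hn : 3 * t ≤ n) {P : AffinePoint k res O (n + 1)} {π : Fˣ}
    (hπ : IsParameter ord P π) :
    (hC.residueHom P).ker ≤
      ((symbolMod (Fsub k res ord n) π).comp (hC.supportedUnits O n).subtype).ker := by
  have mem_ker {X Y : hC.supportedUnits O n} {m : ℤ} (hm : m < 2 * (n + 1))
      (hX : ((X : Fˣ) : F) ∈ L (single O m)) (hY : ((Y : Fˣ) : F) ∈ L (single O m))
      (hXY : hC.residueHom P X = hC.residueHom P Y) :
      X / Y ∈ ((symbolMod (Fsub k res ord n) π).comp (hC.supportedUnits O n).subtype).ker :=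
    symbolMod_eq_one_iff.2
      (hC.symbol_div_mem_Fsub hO hπ X.2 Y.2 hm hX hY (congrArg Units.val hXY))
  refine ker_le_of_fractions (hC.closure_supportedUnits_mem_L hO hn)
    (hC.exists_residueHom_eq_mul_and_eq_mul hO hn P) ?_ ?_
  · intro a ha b hb a' ha' b' hb'
    exact mem_ker (by omega) (hC.mul_mem_L_single ha hb') (hC.mul_mem_L_single ha' hb)
  · intro w hw
    obtain ⟨a, b, ha, hb, hab⟩ := hC.exists_residueHom_eq_mul hO hn P (hC.residueHom P w)
    refine ⟨a, ha, b, hC.L_single_mono (by omega) hb, hab, mem_ker (m := n + t + 2 * t) (by omega)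
      (hC.mul_mem_L_single hw hb) (hC.L_single_mono (by omega) ha) ?_⟩
    rw [map_mul, hab]

lemma le_finrank_L_single (hC : IsProjCurve k F res ord ev L t) (hO : finrank k (res O) = 1)
    (m : ℤ) : m + 1 - t ≤ finrank k (L (single O m)) := by
  have := hC.rr_ineq (single O m)
  rwa [divDeg_single_of_finrank_eq_one k res hO] at this

lemma exists_mem_L_single_ord_ne_zero (hC : IsProjCurve k F res ord ev L t)
    (hO : finrank k (res O) = 1) {P : Pt} (hP : P ≠ O) :
    ∃ u : Fˣ, (u : F) ∈ L (single O (finrank k (res P) + t : ℤ)) ∧ ord P (u : F) ≠ 0 := by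
  obtain ⟨S, u, hS, -, hu⟩ := hC.exists_add_eq_divisor_add_single hO (single P 1)
  have effective : (0 : Pt →₀ ℤ) ≤ single P 1 + S :=
    add_nonneg (Finsupp.single_nonneg.2 one_pos.le) hS
  have ord_eq : 1 + S P = ord P (u : F) := by
    simpa [Finsupp.single_eq_of_ne hP] using DFunLike.congr_fun hu P
  rw [divDeg_single, mul_one] at hu
  have hSP : 0 ≤ S P := hS P
  exact ⟨u, hC.mem_L_of_divisor_eq effective hu, by omega⟩

lemma exists_isParameter (hC : IsProjCurve k F res ord ev L t) (hO : finrank k (res O) = 1)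
    {n : ℕ} (hn : t ≤ n) (P : AffinePoint k res O (n + 1)) :
    ∃ π : Fˣ, (π : F) ∈ L (single O (n + 1 + t : ℤ)) ∧ IsParameter ord P π := by
  obtain ⟨π, hπ, ord_ne_zero⟩ := hC.exists_mem_L_single_ord_ne_zero hO P.2.1
  rw [P.2.2, Nat.cast_add_one] at hπ
  exact ⟨π, hπ, hC.isParameter_of_mem_L hO (by omega) hπ ord_ne_zero⟩

lemma eq_zero_of_mul_eq_mul (hC : IsProjCurve k F res ord ev L t) {D E : Pt →₀ ℤ} {P : Pt}
    (hDP : D P = 0) (hEP : E P = 0) (hE : divDeg k res E < finrank k (res P)) {v w : Fˣ}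
    (hv : 0 < ord P (v : F)) (hw : ord P (w : F) = 0) {f g : F} (hf : f ∈ L D) (hg : g ∈ L E)
    (h : v * f = w * g) : g = 0 := by
  by_contra hg₀
  have hf₀ : f ≠ 0 := right_ne_zero_of_mul (h ▸ mul_ne_zero w.ne_zero hg₀)
  have ord_eq := congrArg (ord P) h
  rw [hC.ord_mul P _ _ v.ne_zero hf₀, hC.ord_mul P _ _ w.ne_zero hg₀, hw, zero_add] at ord_eq
  have := hC.ord_nonneg_of_mem_L hf hDP hf₀
  refine hE.not_ge (hC.finrank_le_of_mem_L (u := Units.mk0 g hg₀) hg ?_)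
  rw [hEP, zero_add, Units.val_mk0]
  omega

lemma disjoint_map_mulLeft_L (hC : IsProjCurve k F res ord ev L t)
    (hO : finrank k (res O) = 1) {n : ℕ} {m : ℤ} (hmn : m ≤ n) {P Q : AffinePoint k res O (n + 1)}
    (hPQ : P ≠ Q) {π ρ : Fˣ} (hπ : IsParameter ord P π) (hρ : IsParameter ord Q ρ) :
    Disjoint ((L (single O m)).map (LinearMap.mulLeft k (π : F)))
      ((L (single O m)).map (LinearMap.mulLeft k (ρ : F))) := by
  rw [Submodule.disjoint_def]
  rintro _ ⟨f, hf, hfg⟩ ⟨g, hg, rfl⟩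
  have hg₀ := hC.eq_zero_of_mul_eq_mul (single_apply_affinePoint P _)
    (single_apply_affinePoint P _)
    (by rw [divDeg_single_of_finrank_eq_one k res hO, P.2.2]; omega)
    (by rw [hπ.ord_affinePoint, Finsupp.single_eq_same]; exact one_pos)
    (by rw [hρ.ord_affinePoint, Finsupp.single_eq_of_ne fun h => hPQ (Subtype.ext h)]) hf hg hfg
  rw [hg₀, map_zero]

lemma exists_mul_add_mul_mem_L (hC : IsProjCurve k F res ord ev L t)
    (hO : finrank k (res O) = 1) {n : ℕ} (hn : 3 * t ≤ n) {P Q : AffinePoint k res O (n + 1)}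
    (hPQ : P ≠ Q) {π ρ : Fˣ} (hπ : IsParameter ord P π) (hρ : IsParameter ord Q ρ)
    (hπL : (π : F) ∈ L (single O (n + 1 + t : ℤ))) (hρL : (ρ : F) ∈ L (single O (n + 1 + t : ℤ))) :
    ∃ a ∈ L (single O (3 * t : ℤ)), ∃ b ∈ L (single O (3 * t : ℤ)),
      π * a + ρ * b ∈ L (single O (n : ℤ)) ∧ π * a + ρ * b ≠ 0 := by
  let V := L (single O (3 * t : ℤ))
  let M := L (single O (n + 1 + t + 3 * t : ℤ))
  let πV := V.map (LinearMap.mulLeft k (π : F))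
  let ρV := V.map (LinearMap.mulLeft k (ρ : F))
  have hM := hC.finiteDimensional_L (single O (n + 1 + t + 3 * t : ℤ))
  have hπM : πV ≤ M := Submodule.map_le_iff_le_comap.2 fun f hf => hC.mul_mem_L_single hπL hf
  have hρM : ρV ≤ M := Submodule.map_le_iff_le_comap.2 fun f hf => hC.mul_mem_L_single hρL hf
  have inf_eq_bot : πV ⊓ ρV = ⊥ :=
    (hC.disjoint_map_mulLeft_L hO (by omega) hPQ hπ hρ).eq_bot
  have finrank_sup : finrank k (πV ⊔ ρV : Submodule k F) = finrank k V + finrank k V := by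
    have := Submodule.finiteDimensional_of_le hπM
    have := Submodule.finiteDimensional_of_le hρM
    have := Submodule.finrank_sup_add_finrank_inf_eq πV ρV
    rwa [inf_eq_bot, finrank_bot, add_zero, finrank_map_mulLeft π.ne_zero,
      finrank_map_mulLeft ρ.ne_zero] at this
  have finrank_M : (finrank k M : ℤ) = n + 1 + t + 3 * t + 1 - t := by
    have := hC.rr_eq (single O (n + 1 + t + 3 * t : ℤ)) (by
      rw [divDeg_single_of_finrank_eq_one k res hO]
      omega)
    rwa [divDeg_single_of_finrank_eq_one k res hO] at this
  have inf_pos := finrank_add_finrank_le_add_finrank_inf (sup_le hπM hρM)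
    (hC.L_single_mono (show (n : ℤ) ≤ n + 1 + t + 3 * t by omega))
  have : (3 * t + 1 - t : ℤ) ≤ finrank k V := hC.le_finrank_L_single hO _
  have : (n + 1 - t : ℤ) ≤ finrank k (L (single O (n : ℤ))) := hC.le_finrank_L_single hO _
  obtain ⟨c, ⟨hc, hcL⟩, hc₀⟩ := exists_mem_ne_zero_of_finrank_pos
    (A := (πV ⊔ ρV) ⊓ L (single O (n : ℤ))) (by omega)
  obtain ⟨_, ⟨a, ha, rfl⟩, _, ⟨b, hb, rfl⟩, rfl⟩ := Submodule.mem_sup.1 hc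
  exact ⟨a, ha, b, hb, hcL, hc₀⟩

lemma exists_mul_add_mul_eq (hC : IsProjCurve k F res ord ev L t)
    (hO : finrank k (res O) = 1) {n : ℕ} (hn : 3 * t ≤ n) {P Q : AffinePoint k res O (n + 1)}
    (hPQ : P ≠ Q) {π ρ : Fˣ} (hπ : IsParameter ord P π) (hρ : IsParameter ord Q ρ)
    (hπL : (π : F) ∈ L (single O (n + 1 + t : ℤ))) (hρL : (ρ : F) ∈ L (single O (n + 1 + t : ℤ))) :
    ∃ a ∈ hC.supportedUnits O n, ∃ b ∈ hC.supportedUnits O n, ∃ c ∈ hC.supportedUnits O n,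
      (π * a + ρ * b : F) = c := by
  obtain ⟨a, ha, b, hb, hc, hc₀⟩ := hC.exists_mul_add_mul_mem_L hO hn hPQ hπ hρ hπL hρL
  have mul_not_mem {R : AffinePoint k res O (n + 1)} {σ : Fˣ} (hσ : IsParameter ord R σ) {f : F}
      (hf : f ∈ L (single O (3 * t : ℤ))) (hσf₀ : σ * f ≠ 0) : σ * f ∉ L (single O (n : ℤ)) :=
    fun hσf => hσf₀ <| hC.eq_zero_of_mul_eq_mul (single_apply_affinePoint R _)
      (single_apply_affinePoint R _) (divDeg_single_lt hO R) (w := 1)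
      (by rw [hσ.ord_affinePoint, Finsupp.single_eq_same]; exact one_pos) (hC.ord_one R) hf hσf
      (by rw [Units.val_one, one_mul])
  have ha₀ : a ≠ 0 := by
    rintro rfl
    rw [mul_zero, zero_add] at hc hc₀
    exact mul_not_mem hρ hb hc₀ hc
  have hb₀ : b ≠ 0 := by
    rintro rfl
    rw [mul_zero, add_zero] at hc hc₀
    exact mul_not_mem hπ ha hc₀ hc
  exact ⟨Units.mk0 a ha₀, hC.mem_supportedUnits_of_mem_L hO (by omega) ha,
    Units.mk0 b hb₀, hC.mem_supportedUnits_of_mem_L hO (by omega) hb,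
    Units.mk0 _ hc₀, hC.mem_supportedUnits_of_mem_L hO le_rfl hc, rfl⟩

lemma neg_one_mem_supportedUnits (hC : IsProjCurve k F res ord ev L t) (n : ℕ) :
    -1 ∈ hC.supportedUnits O n :=
  hC.mem_supportedUnits.2 fun Q _ _ => by
    have := DFunLike.congr_fun (hC.divisor_mul (-1) (-1)) Q
    rw [neg_mul_neg, one_mul, divisor_one, Finsupp.add_apply, divisor_apply,
      Finsupp.zero_apply] at this
    rw [mem_unitsAt]
    omega

lemma exists_mem_closure_range_divisor_eq (hC : IsProjCurve k F res ord ev L t) {n : ℕ}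
    {π : AffinePoint k res O (n + 1) → Fˣ} (hπ : ∀ P, IsParameter ord P (π P)) {D : Pt →₀ ℤ}
    (hD : ∀ Q ≠ O, n + 1 < finrank k (res Q) → D Q = 0) :
    ∃ g ∈ Subgroup.closure (Set.range π),
      ∀ Q ≠ O, n < finrank k (res Q) → D Q = hC.divisor g Q := by
  suffices ∀ E ∈ AddSubgroup.closure ((single · (1 : ℤ)) '' (D.support : Set Pt)),
      ∃ g ∈ Subgroup.closure (Set.range π),
        ∀ Q ≠ O, n < finrank k (res Q) → E Q = hC.divisor g Q from
    this D (mem_closure_single D)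
  intro E hE
  induction hE using AddSubgroup.closure_induction with
  | mem _ h =>
    obtain ⟨P, hP, rfl⟩ := h
    by_cases hPn : P ≠ O ∧ finrank k (res P) = n + 1
    · exact ⟨π ⟨P, hPn⟩, Subgroup.subset_closure ⟨_, rfl⟩, fun Q hQ hQn =>
        (hπ ⟨P, hPn⟩ Q hQ hQn).symm⟩
    · refine ⟨1, one_mem _, fun Q hQ hQn => ?_⟩
      rw [divisor_one, Finsupp.zero_apply, Finsupp.single_eq_of_ne]
      rintro rfl
      exact Finsupp.mem_support_iff.1 hP
        (hD Q hQ (lt_of_le_of_ne hQn fun h => hPn ⟨hQ, h.symm⟩))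
  | zero => exact ⟨1, one_mem _, fun Q _ _ => by rw [divisor_one]⟩
  | add D E _ _ hD hE =>
    obtain ⟨g, hg, hgD⟩ := hD
    obtain ⟨h, hh, hhE⟩ := hE
    exact ⟨g * h, mul_mem hg hh, fun Q hQ hQn => by
      rw [divisor_mul, Finsupp.add_apply, Finsupp.add_apply, hgD Q hQ hQn, hhE Q hQ hQn]⟩
  | neg D _ hD =>
    obtain ⟨g, hg, hgD⟩ := hD
    exact ⟨g⁻¹, inv_mem hg, fun Q hQ hQn => by
      rw [divisor_inv, Finsupp.neg_apply, Finsupp.neg_apply, hgD Q hQ hQn]⟩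

lemma supportedUnits_succ_le (hC : IsProjCurve k F res ord ev L t) {n : ℕ}
    {π : AffinePoint k res O (n + 1) → Fˣ} (hπ : ∀ P, IsParameter ord P (π P)) :
    hC.supportedUnits O (n + 1) ≤
      Subgroup.closure (hC.supportedUnits O n ∪ Set.range π) := fun u hu => by
  obtain ⟨g, hg, hgu⟩ := hC.exists_mem_closure_range_divisor_eq hπ (D := hC.divisor u)
    (hC.mem_supportedUnits.1 hu)
  rw [← div_mul_cancel u g]
  exact mul_mem (Subgroup.subset_closure (Or.inl (hC.div_mem_supportedUnits hgu)))
    (Subgroup.closure_mono Set.subset_union_right hg)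

lemma Fsub_succ_le (hC : IsProjCurve k F res ord ev L t) (hO : finrank k (res O) = 1) {n : ℕ}
    (hn : 3 * t ≤ n) {π : AffinePoint k res O (n + 1) → Fˣ} (hπ : ∀ P, IsParameter ord P (π P))
    (hπL : ∀ P, (π P : F) ∈ L (single O (n + 1 + t : ℤ))) {B : AddSubgroup (K2 F)}
    (hB : Fsub k res ord n ≤ B) (hπB : ∀ u ∈ hC.supportedUnits O n, ∀ P, symbol u (π P) ∈ B) :
    Fsub k res ord (n + 1) ≤ B := by
  have low_low {u v} (hu : u ∈ hC.supportedUnits O n) (hv : v ∈ hC.supportedUnits O n) :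
      symbol u v ∈ B := hB (hC.symbol_mem_Fsub hO hu hv)
  have parameter_low {u} (hu : u ∈ hC.supportedUnits O n) (P) : symbol (π P) u ∈ B :=
    symbol_swap u (π P) ▸ B.neg_mem (hπB u hu P)
  have parameter_parameter (P Q) : symbol (π P) (π Q) ∈ B := by
    rcases eq_or_ne P Q with rfl | hPQ
    · rw [symbol_self]
      exact parameter_low (hC.neg_one_mem_supportedUnits n) P
    obtain ⟨a, ha, b, hb, c, hc, h⟩ :=
      hC.exists_mul_add_mul_eq hO hn hPQ (hπ P) (hπ Q) (hπL P) (hπL Q)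
    exact symbol_mem_of_mul_add_mul_eq h (parameter_low (div_mem hb hc) P)
      (hπB _ (div_mem ha hc) Q) (low_low (div_mem ha hc) (div_mem hb hc))
  have mem_supportedUnits_succ {u : Fˣ}
      (hu : ∀ P, ord P (u : F) ≠ 0 → finrank k (res P) ≤ n + 1) :
      u ∈ hC.supportedUnits O (n + 1) :=
    hC.mem_supportedUnits.2 fun Q _ hQn => by_contra fun h => hQn.not_ge (hu Q h)
  refine (AddSubgroup.closure_le _).2 ?_
  rintro _ ⟨f, g, hf, hg, rfl⟩
  refine symbol_mem_of_mem_closure ?_ (hC.supportedUnits_succ_le hπ (mem_supportedUnits_succ hf))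
    (hC.supportedUnits_succ_le hπ (mem_supportedUnits_succ hg))
  rintro u (hu | ⟨P, rfl⟩) v (hv | ⟨Q, rfl⟩)
  · exact low_low hu hv
  · exact hπB u hu Q
  · exact parameter_low hv P
  · exact parameter_parameter P Q

section Tame

variable {T : K2 F →+ Π₀ P : Pt, Additive (res P)ˣ}

lemma tame_symbol (hC : IsProjCurve k F res ord ev L t) (hT : IsTameSymbol ord ev T) {u v : Fˣ}
    {Q : Pt} (hu : u ∈ hC.unitsAt Q) :
    T (symbol u v) Q = ord Q (v : F) • Additive.ofMul (hC.evUnits Q ⟨u, hu⟩) := by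
  refine Additive.toMul.injective (Units.ext ?_)
  rw [hT, hC.mem_unitsAt.1 hu, zero_mul, neg_zero, zpow_zero, zpow_zero, one_mul, mul_one,
    toMul_zsmul, toMul_ofMul, ← map_zpow]
  rfl

lemma tame_eq_zero_of_mem_Fsub (hC : IsProjCurve k F res ord ev L t)
    (hT : IsTameSymbol ord ev T) {n : ℕ} {x : K2 F} (hx : x ∈ Fsub k res ord n) {Q : Pt}
    (hQ : n < finrank k (res Q)) : T x Q = 0 := by
  induction hx using AddSubgroup.closure_induction with
  | mem x hx =>
    obtain ⟨f, g, hf, hg, rfl⟩ := hx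
    have hfQ : ord Q (f : F) = 0 := by_contra fun h => hQ.not_ge (hf Q h)
    have hgQ : ord Q (g : F) = 0 := by_contra fun h => hQ.not_ge (hg Q h)
    rw [hC.tame_symbol hT hfQ, hgQ, zero_smul]
  | zero => rw [map_zero, DFinsupp.zero_apply]
  | add x y _ _ hx hy => rw [map_add, DFinsupp.add_apply, hx, hy, add_zero]
  | neg x _ hx => rw [map_neg, DFinsupp.neg_apply, hx, neg_zero]

lemma affineTame_eq_zero_of_mem_Fsub (hC : IsProjCurve k F res ord ev L t)
    (hT : IsTameSymbol ord ev T) {n : ℕ} {x : K2 F} (hx : x ∈ Fsub k res ord n) :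
    affineTame k T O (n + 1) x = 0 :=
  DFinsupp.ext fun P => hC.tame_eq_zero_of_mem_Fsub hT hx (by rw [P.2.2]; exact n.lt_succ_self)

open Classical in
lemma affineTame_symbol (hC : IsProjCurve k F res ord ev L t) (hT : IsTameSymbol ord ev T)
    {n : ℕ} {P : AffinePoint k res O (n + 1)} {π : Fˣ} (hπ : IsParameter ord P π)
    (u : hC.supportedUnits O n) :
    affineTame k T O (n + 1) (symbol u π) =
      DFinsupp.single P (Additive.ofMul (hC.residueHom P u)) := by
  ext Q : 1
  rw [affineTame_apply, hC.tame_symbol hT (hC.supportedUnits_le_unitsAt Q u.2), hπ.ord_affinePoint]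
  rcases eq_or_ne Q P with rfl | hQP
  · rw [Finsupp.single_eq_same, one_smul, DFinsupp.single_eq_same]
    rfl
  · rw [Finsupp.single_eq_of_ne fun h => hQP (Subtype.ext h), zero_smul,
      DFinsupp.single_eq_of_ne hQP]

lemma exists_mem_Fsub_affineTame_eq (hC : IsProjCurve k F res ord ev L t)
    (hO : finrank k (res O) = 1) (hT : IsTameSymbol ord ev T) {n : ℕ} (hn : 3 * t ≤ n)
    {π : AffinePoint k res O (n + 1) → Fˣ} (hπ : ∀ P, IsParameter ord P (π P))
    (y : Π₀ P : AffinePoint k res O (n + 1), Additive (res P.1)ˣ) :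
    ∃ x ∈ Fsub k res ord (n + 1), affineTame k T O (n + 1) x = y := by
  classical
  induction y using DFinsupp.induction with
  | h0 => exact ⟨0, zero_mem _, map_zero _⟩
  | ha P b y _ _ ih =>
    obtain ⟨x, hx, rfl⟩ := ih
    obtain ⟨u, hu⟩ := hC.residueHom_surjective hO hn P b.toMul
    refine ⟨symbol u (π P) + x, add_mem (hC.symbol_mem_Fsub hO
      (hC.supportedUnits_mono O n.le_succ u.2) ((hπ P).mem_supportedUnits hC)) hx, ?_⟩
    rw [map_add, hC.affineTame_symbol hT (hπ P), hu, ofMul_toMul]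

open Classical in
/-- The inverse of the map induced by the tame symbol on `F_{n+1} / F_n`: it sends `u(P)` in the
component at `P` to the class of `{u, π_P}`. -/
def tameInverse (hC : IsProjCurve k F res ord ev L t) (hO : finrank k (res O) = 1) {n : ℕ}
    (hn : 3 * t ≤ n) {π : AffinePoint k res O (n + 1) → Fˣ} (hπ : ∀ P, IsParameter ord P (π P)) :
    (Π₀ P : AffinePoint k res O (n + 1), Additive (res P.1)ˣ) →+ K2 F ⧸ Fsub k res ord n :=
  DFinsupp.liftAddHom fun P => MonoidHom.toAdditiveLeft <|
    (hC.residueHom P).liftOfSurjective (hC.residueHom_surjective hO hn P)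
      ⟨(symbolMod (Fsub k res ord n) (π P)).comp (hC.supportedUnits O n).subtype,
        hC.ker_residueHom_le hO hn (hπ P)⟩

open Classical in
lemma tameInverse_single (hC : IsProjCurve k F res ord ev L t) (hO : finrank k (res O) = 1)
    {n : ℕ} (hn : 3 * t ≤ n) {π : AffinePoint k res O (n + 1) → Fˣ}
    (hπ : ∀ P, IsParameter ord P (π P)) (P : AffinePoint k res O (n + 1))
    (u : hC.supportedUnits O n) :
    hC.tameInverse hO hn hπ (DFinsupp.single P (Additive.ofMul (hC.residueHom P u))) =
      (symbol u (π P) : K2 F ⧸ Fsub k res ord n) := by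
  rw [tameInverse, DFinsupp.liftAddHom_apply_single]
  exact congrArg Multiplicative.toAdd (MonoidHom.liftOfRightInverse_comp_apply _ _ _ _ u)

lemma tameInverse_affineTame (hC : IsProjCurve k F res ord ev L t) (hO : finrank k (res O) = 1)
    (hT : IsTameSymbol ord ev T) {n : ℕ} (hn : 3 * t ≤ n)
    {π : AffinePoint k res O (n + 1) → Fˣ} (hπ : ∀ P, IsParameter ord P (π P))
    (hπL : ∀ P, (π P : F) ∈ L (single O (n + 1 + t : ℤ))) {x : K2 F}
    (hx : x ∈ Fsub k res ord (n + 1)) :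
    hC.tameInverse hO hn hπ (affineTame k T O (n + 1) x) = (x : K2 F ⧸ Fsub k res ord n) := by
  refine hC.Fsub_succ_le hO hn hπ hπL
    (B := ((hC.tameInverse hO hn hπ).comp (affineTame k T O (n + 1))).eqLocus
      (QuotientAddGroup.mk' (Fsub k res ord n))) (fun y hy => ?_) (fun u hu P => ?_) hx
  · change hC.tameInverse hO hn hπ (affineTame k T O (n + 1) y) = (y : K2 F ⧸ Fsub k res ord n)
    rw [hC.affineTame_eq_zero_of_mem_Fsub hT hy, map_zero]
    exact ((QuotientAddGroup.eq_zero_iff y).2 hy).symm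
  · change hC.tameInverse hO hn hπ (affineTame k T O (n + 1) (symbol u (π P))) =
      (symbol u (π P) : K2 F ⧸ Fsub k res ord n)
    rw [hC.affineTame_symbol hT (hπ P) ⟨u, hu⟩, hC.tameInverse_single]

lemma affineTame_eq_zero_iff (hC : IsProjCurve k F res ord ev L t) (hO : finrank k (res O) = 1)
    (hT : IsTameSymbol ord ev T) {n : ℕ} (hn : 3 * t ≤ n)
    {π : AffinePoint k res O (n + 1) → Fˣ} (hπ : ∀ P, IsParameter ord P (π P))
    (hπL : ∀ P, (π P : F) ∈ L (single O (n + 1 + t : ℤ))) {x : K2 F}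
    (hx : x ∈ Fsub k res ord (n + 1)) :
    affineTame k T O (n + 1) x = 0 ↔ x ∈ Fsub k res ord n := by
  refine ⟨fun h => ?_, hC.affineTame_eq_zero_of_mem_Fsub hT⟩
  rw [← QuotientAddGroup.eq_zero_iff, ← hC.tameInverse_affineTame hO hT hn hπ hπL hx, h, map_zero]

end Tame

end RationalPoint

end IsProjCurve

/-- first isomorphism of Theorem `introker1`.  Let `C` be a regular,
irreducible curve, projective over `k`, with function field `F`, arithmetic genus `t`
and a `k`-rational point `O`.  For every `d ≥ 3t + 1` the tame symbol induces an
isomorphism `F_d / F_{d-1} ≅ ∐_{O ≠ P ∈ C_d} k(P)^*`; this is expressed by saying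
that the induced map `F_d → ∐_{O ≠ P ∈ C_d} k(P)^*` is surjective and has kernel
`F_{d-1}`. -/
theorem statement2 (k F : Type*) [Field k] [Field F] [Algebra k F]
    {Pt : Type*} (res : Pt → Type*) [∀ P, Field (res P)] [∀ P, Algebra k (res P)]
    (ord : Pt → F → ℤ) (ev : ∀ P, F → res P)
    (L : (Pt →₀ ℤ) → Submodule k F) (t : ℕ)
    (hC : IsProjCurve k F res ord ev L t)
    (O : Pt) (hO : Module.finrank k (res O) = 1)
    (T : K2 F →+ Π₀ P : Pt, Additive ((res P)ˣ)) (hT : IsTameSymbol ord ev T)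
    (d : ℕ) (hd : 3 * t + 1 ≤ d) :
    (∀ y : Π₀ P : Pt, Additive ((res P)ˣ),
      ∃ x ∈ Fsub k res ord d,
        ∀ P, P ≠ O → Module.finrank k (res P) = d → T x P = y P) ∧
    (∀ x ∈ Fsub k res ord d,
      ((∀ P, P ≠ O → Module.finrank k (res P) = d → T x P = 0) ↔
        x ∈ Fsub k res ord (d - 1))) := by
  obtain ⟨n, rfl⟩ : ∃ n, d = n + 1 := ⟨d - 1, by omega⟩
  have hn : 3 * t ≤ n := by omega
  choose π hπL hπ using hC.exists_isParameter hO (n := n) (by omega)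
  refine ⟨fun y => ?_, fun x hx => ?_⟩
  · classical
    obtain ⟨x, hx, hxy⟩ := hC.exists_mem_Fsub_affineTame_eq hO hT hn hπ (y.subtypeDomain _)
    exact ⟨x, hx, fun P hP hPn => DFunLike.congr_fun hxy ⟨P, hP, hPn⟩⟩
  · rw [Nat.add_sub_cancel, ← hC.affineTame_eq_zero_iff hO hT hn hπ hπL hx, DFinsupp.ext_iff]
    exact ⟨fun h P => h P P.2.1 P.2.2, fun h P hP hPn => h ⟨P, hP, hPn⟩⟩

end
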